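/- Let β ∈ (0,2], n ∈ ℕ, define φ₁(λ) = log(1 + λ^{β/2}), φ_{k+1} = φ₁ ∘ φ_k, and ψ_n(λ) = λ/φ_n(λ), and let ν_n : (0,∞) → (0,∞) be a decreasing function with ψ_n(λ) − ψ_n(0+) = ∫_0^∞ (1 − e^{−λt}) ν_n(t) dt for all λ > 0. For an integer d ≥ 3, define j(r) = ∫_0^∞ (4πt)^{−d/2} e^{−r²/(4t)} ν_n(t) dt. Then j(r) ≍ r^{−d−2} (log_n(1/r))^{−2} · ∏_{k=1}^{n−1} (log_k(1/r))^{−1} as r → 0+ (the product being 1 when n = 1). -/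

import Mathlib

open MeasureTheory Set Filter Topology

/-- Iterated geometric stable Laplace exponents: `phiIter β 1 λ = log(1 + λ^{β/2})` and
`phiIter β (n+1) = phiIter β 1 ∘ phiIter β n`. -/
noncomputable def phiIter (β : ℝ) : ℕ → ℝ → ℝ
  | 0, l => l
  | n + 1, l => Real.log (1 + phiIter β n l ^ (β / 2))

/-- Iterated logarithms: `iterLog 1 = log`, `iterLog (k+1) = log ∘ iterLog k`. -/
noncomputable def iterLog : ℕ → ℝ → ℝ
  | 0, x => x
  | n + 1, x => Real.log (iterLog n x)

lemma iterLog_tendsto (n : ℕ) : Tendsto (iterLog n) atTop atTop := by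
  induction n with
  | zero => exact tendsto_id
  | succ n ih => exact Real.tendsto_log_atTop.comp ih

lemma iterLog_large (n : ℕ) (B : ℝ) : ∀ᶠ x in atTop, ∀ k, k ≤ n → B ≤ iterLog k x := by
  have : ∀ᶠ x in atTop, ∀ k ∈ Finset.range (n+1), B ≤ iterLog k x := by
    rw [Filter.eventually_all_finset]
    intro k _
    exact (iterLog_tendsto k).eventually_ge_atTop B
  filter_upwards [this] with x hx k hk
  exact hx k (Finset.mem_range.2 (by omega))

lemma iterLog_mono (n : ℕ) (x y : ℝ) (hxy : x ≤ y) (hx : ∀ k, k ≤ n → 2 ≤ iterLog k x) :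
    ∀ k, k ≤ n → iterLog k x ≤ iterLog k y := by
  intro k
  induction k with
  | zero => intro _; exact hxy
  | succ k ih =>
    intro hk
    have h1 := ih (by omega)
    have h2 := hx k (by omega)
    exact Real.log_le_log (by linarith) h1

lemma iterLog_sq (n : ℕ) (x : ℝ) (hx : ∀ k, k ≤ n → 2 ≤ iterLog k x) :
    ∀ k, k + 1 ≤ n → iterLog (k+1) (x^2) ≤ 2 * iterLog (k+1) x := by
  intro k
  induction k with
  | zero => intro _; simp [iterLog]
  | succ k ih =>
    intro hk
    have h1 := ih (by omega)
    have h2 := hx (k+1) (by omega)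
    have h0 := hx 0 (by omega)
    simp only [iterLog] at h0
    have h3 := iterLog_mono n x (x^2) (by nlinarith) hx (k+1) (by omega)
    show Real.log (iterLog (k+1) (x^2)) ≤ 2 * Real.log (iterLog (k+1) x)
    calc Real.log (iterLog (k+1) (x^2)) ≤ Real.log ((iterLog (k+1) x)^2) :=
          Real.log_le_log (by linarith) (by nlinarith)
      _ = _ := by rw [Real.log_pow]; norm_num

lemma iterLog_le_log (n : ℕ) (x : ℝ) (hx : ∀ k, k ≤ n → 2 ≤ iterLog k x) :
    ∀ k, k + 1 ≤ n → iterLog (k+1) x ≤ Real.log x := by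
  intro k
  induction k with
  | zero => intro _; simp [iterLog]
  | succ k ih =>
    intro hk
    have h1 := ih (by omega)
    have h2 := hx (k+1) (by omega)
    show Real.log (iterLog (k+1) x) ≤ _
    have := Real.log_le_sub_one_of_pos (show 0 < iterLog (k+1) x by linarith)
    linarith

noncomputable def GG (n : ℕ) (x : ℝ) : ℝ :=
  (iterLog n x ^ 2)⁻¹ * ∏ k ∈ Finset.Icc 1 (n - 1), (iterLog k x)⁻¹

lemma GG_pos (n : ℕ) (x : ℝ) (hx : ∀ k, k ≤ n → 2 ≤ iterLog k x) : 0 < GG n x := by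
  unfold GG
  have := hx n le_rfl
  apply mul_pos (by positivity)
  apply Finset.prod_pos
  intro k hk
  rw [Finset.mem_Icc] at hk
  have := hx k (by omega)
  positivity

lemma GG_anti (n : ℕ) (x y : ℝ) (hxy : x ≤ y) (hx : ∀ k, k ≤ n → 2 ≤ iterLog k x) :
    GG n y ≤ GG n x := by
  unfold GG
  have hm := iterLog_mono n x y hxy hx
  have h1 := hx n le_rfl
  have h2 := hm n le_rfl
  have hP : ∏ k ∈ Finset.Icc 1 (n - 1), (iterLog k y)⁻¹
      ≤ ∏ k ∈ Finset.Icc 1 (n - 1), (iterLog k x)⁻¹ := by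
    apply Finset.prod_le_prod
    · intro k hk
      rw [Finset.mem_Icc] at hk
      have := hx k (by omega)
      have := hm k (by omega)
      have : 0 < iterLog k y := by linarith
      positivity
    · intro k hk
      rw [Finset.mem_Icc] at hk
      have := hx k (by omega)
      have := hm k (by omega)
      exact inv_anti₀ (by linarith) this
  apply mul_le_mul _ hP
  · apply Finset.prod_nonneg
    intro k hk
    rw [Finset.mem_Icc] at hk
    have := hx k (by omega)
    have := hm k (by omega)
    have : 0 < iterLog k y := by linarith
    positivity
  · positivity
  · exact inv_anti₀ (by positivity) (by gcongr)

lemma GG_sq (n : ℕ) (hn : 1 ≤ n) (x : ℝ) (hx : ∀ k, k ≤ n → 2 ≤ iterLog k x) :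
    GG n x ≤ (4 * 2^(n-1)) * GG n (x^2) := by
  unfold GG
  have h0 := hx 0 (by omega)
  simp only [iterLog] at h0
  have hm := iterLog_mono n x (x^2) (by nlinarith) hx
  have hs := iterLog_sq n x hx
  have key : ∀ k, 1 ≤ k → k ≤ n → (iterLog k x)⁻¹ ≤ 2 * (iterLog k (x^2))⁻¹ := by
    intro k hk1 hk
    obtain ⟨m, rfl⟩ : ∃ m, k = m + 1 := ⟨k-1, by omega⟩
    have a1 := hx _ hk
    have a2 := hm _ hk
    have a3 := hs m hk
    rw [← div_eq_mul_inv, le_div_iff₀ (by linarith), inv_mul_le_iff₀ (by linarith)]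
    linarith
  have hP : ∏ k ∈ Finset.Icc 1 (n - 1), (iterLog k x)⁻¹
      ≤ 2^(n-1) * ∏ k ∈ Finset.Icc 1 (n - 1), (iterLog k (x^2))⁻¹ := by
    have : (2:ℝ)^(n-1) = ∏ k ∈ Finset.Icc 1 (n - 1), (2:ℝ) := by simp
    rw [this, ← Finset.prod_mul_distrib]
    apply Finset.prod_le_prod
    · intro k hk
      rw [Finset.mem_Icc] at hk
      have := hx k (by omega)
      positivity
    · intro k hk
      rw [Finset.mem_Icc] at hk
      exact key k hk.1 (by omega)
  have h1 := hx n le_rfl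
  have k1 := key n hn le_rfl
  have hq : (iterLog n x ^ 2)⁻¹ ≤ 4 * (iterLog n (x^2) ^ 2)⁻¹ := by
    have : (0:ℝ) ≤ (iterLog n x)⁻¹ := by positivity
    have := pow_le_pow_left₀ this k1 2
    rw [mul_pow, inv_pow, inv_pow] at this
    linarith
  calc _ ≤ (4 * (iterLog n (x^2) ^ 2)⁻¹) * (2^(n-1) * ∏ k ∈ Finset.Icc 1 (n - 1), (iterLog k (x^2))⁻¹) := by
        apply mul_le_mul hq hP
        · apply Finset.prod_nonneg
          intro k hk
          rw [Finset.mem_Icc] at hk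
          have := hx k (by omega)
          positivity
        · positivity
    _ = _ := by ring

lemma GG_le (n : ℕ) (x : ℝ) (hx : ∀ k, k ≤ n → 2 ≤ iterLog k x) :
    GG n x ≤ (iterLog n x)⁻¹ := by
  unfold GG
  have h1 := hx n le_rfl
  have hP : ∏ k ∈ Finset.Icc 1 (n - 1), (iterLog k x)⁻¹ ≤ 1 := by
    apply Finset.prod_le_one
    · intro k hk
      rw [Finset.mem_Icc] at hk
      have := hx k (by omega)
      positivity
    · intro k hk
      rw [Finset.mem_Icc] at hk
      have := hx k (by omega)
      exact inv_le_one_of_one_le₀ (by linarith)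
  calc _ ≤ (iterLog n x ^ 2)⁻¹ * 1 := by gcongr
    _ ≤ (iterLog n x)⁻¹ := by
      rw [mul_one]
      apply inv_anti₀ (by linarith)
      nlinarith

lemma GG_ge (n : ℕ) (hn : 1 ≤ n) (x : ℝ) (hx : ∀ k, k ≤ n → 2 ≤ iterLog k x) :
    (Real.log x ^ (n+1))⁻¹ ≤ GG n x := by
  unfold GG
  have h1 := hx n le_rfl
  have hl := iterLog_le_log n x hx
  have key : ∀ k, 1 ≤ k → k ≤ n → (Real.log x)⁻¹ ≤ (iterLog k x)⁻¹ := by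
    intro k hk1 hk
    obtain ⟨m, rfl⟩ : ∃ m, k = m + 1 := ⟨k-1, by omega⟩
    have a1 := hx _ hk
    exact inv_anti₀ (by linarith) (hl m hk)
  have h3 : 2 ≤ Real.log x := hx 1 hn
  have hP : ((Real.log x)⁻¹)^(n-1) ≤ ∏ k ∈ Finset.Icc 1 (n - 1), (iterLog k x)⁻¹ := by
    have : ((Real.log x)⁻¹)^(n-1) = ∏ k ∈ Finset.Icc 1 (n - 1), ((Real.log x)⁻¹) := by simp
    rw [this]
    apply Finset.prod_le_prod
    · intro k hk
      positivity
    · intro k hk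
      rw [Finset.mem_Icc] at hk
      exact key k hk.1 (by omega)
  have hq : ((Real.log x)⁻¹)^2 ≤ (iterLog n x ^ 2)⁻¹ := by
    rw [← inv_pow]
    have := key n hn le_rfl
    gcongr
  calc _ = ((Real.log x)⁻¹)^2 * ((Real.log x)⁻¹)^(n-1) := by
        rw [← pow_add, inv_pow]; congr 2; omega
    _ ≤ _ := by gcongr

lemma GG_tendsto (n : ℕ) (hn : 1 ≤ n) : Tendsto (fun x => x * GG n x) atTop atTop := by
  have h := (Real.isLittleO_pow_log_id_atTop (n := n+1))
  rw [tendsto_atTop]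
  intro B
  have hB : 0 < (|B|+1)⁻¹ := by positivity
  filter_upwards [h.bound hB, iterLog_large n 2, eventually_gt_atTop 0] with x h1 h2 h3
  have h4 := GG_ge n hn x h2
  have h5 : 2 ≤ Real.log x := h2 1 hn
  have h6 : 0 < Real.log x ^ (n+1) := by positivity
  simp only [id, Real.norm_eq_abs] at h1
  rw [abs_of_pos h6, abs_of_pos h3, inv_mul_eq_div, le_div_iff₀ (by positivity)] at h1
  have : |B| + 1 ≤ x * (Real.log x ^ (n+1))⁻¹ := by
    rw [← div_eq_mul_inv, le_div_iff₀ h6]; linarith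
  have h7 : x * (Real.log x ^ (n+1))⁻¹ ≤ x * GG n x := by gcongr
  linarith [le_abs_self B]

lemma phi_comp (β : ℝ) (hβ0 : 0 < β) (hβ2 : β ≤ 2) (n : ℕ) :
    ∃ c C : ℝ, 0 < c ∧ 0 < C ∧ ∀ᶠ x in atTop,
      c * iterLog n x ≤ phiIter β n x ∧ phiIter β n x ≤ C * iterLog n x := by
  induction n with
  | zero => exact ⟨1, 1, one_pos, one_pos, by simp [phiIter, iterLog]⟩
  | succ n ih =>
    obtain ⟨c, C, hc, hC, h⟩ := ih
    refine ⟨β/4, 2, by positivity, by norm_num, ?_⟩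
    have e1 := (iterLog_tendsto n).eventually_ge_atTop (1/c)
    have e2 := (iterLog_tendsto (n+1)).eventually_ge_atTop (Real.log (2*C))
    have e3 := (iterLog_tendsto (n+1)).eventually_ge_atTop (-2*Real.log c)
    have e4 := (iterLog_tendsto n).eventually_ge_atTop 1
    filter_upwards [h, e1, e2, e3, e4] with x ⟨h1, h2⟩ e1 e2 e3 e4
    set X := iterLog n x
    set p := phiIter β n x with hp
    have hX : 0 < X := by linarith
    have hp1 : 1 ≤ p := by
      rw [div_le_iff₀ hc] at e1
      linarith
    have hX' : iterLog (n+1) x = Real.log X := rfl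
    have hp' : phiIter β (n+1) x = Real.log (1 + p ^ (β/2)) := rfl
    rw [hX'] at e2 e3 ⊢
    rw [hp']
    have hpa : p ^ (β/2) ≤ p := by
      calc p ^ (β/2) ≤ p ^ (1:ℝ) := Real.rpow_le_rpow_of_exponent_le hp1 (by linarith)
        _ = p := Real.rpow_one p
    have hpp : 0 < p ^ (β/2) := by positivity
    constructor
    · have : Real.log (c * X) ≤ Real.log p := Real.log_le_log (by positivity) h1
      rw [Real.log_mul hc.ne' hX.ne'] at this
      have h3 : Real.log (p ^ (β/2)) ≤ Real.log (1 + p ^ (β/2)) :=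
        Real.log_le_log hpp (by linarith)
      rw [Real.log_rpow (by linarith)] at h3
      have : Real.log X / 2 ≤ Real.log p := by linarith
      have : β/2 * (Real.log X / 2) ≤ β/2 * Real.log p := by gcongr
      linarith
    · have h3 : Real.log (1 + p ^ (β/2)) ≤ Real.log ((2*C) * X) :=
        Real.log_le_log (by linarith) (by linarith)
      rw [Real.log_mul (by positivity) hX.ne'] at h3
      linarith

lemma phi_diff (β : ℝ) (hβ0 : 0 < β) (hβ2 : β ≤ 2) (n : ℕ) :
    ∃ c C : ℝ, 0 < c ∧ 0 < C ∧ ∀ᶠ x in atTop,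
      c * (x * ∏ k ∈ Finset.range n, (iterLog k x)⁻¹) ≤ phiIter β n (2*x) - phiIter β n x ∧
      phiIter β n (2*x) - phiIter β n x ≤ C * (x * ∏ k ∈ Finset.range n, (iterLog k x)⁻¹) ∧
      phiIter β n (2*x) ≤ 2 * phiIter β n x := by
  induction n with
  | zero =>
    refine ⟨1, 1, one_pos, one_pos, Eventually.of_forall fun x => ?_⟩
    simp only [phiIter, Finset.range_zero, Finset.prod_empty]
    refine ⟨by linarith, by linarith, le_rfl⟩
  | succ n ih =>
    obtain ⟨c, C, hc, hC, h⟩ := ih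
    obtain ⟨b, B, hb, hB, hcomp⟩ := phi_comp β hβ0 hβ2 n
    refine ⟨β/8 * c / B, C / b, by positivity, by positivity, ?_⟩
    have e1 := (iterLog_tendsto n).eventually_ge_atTop (1/b)
    filter_upwards [h, hcomp, iterLog_large n 2, e1, eventually_gt_atTop 0]
      with l ⟨h1, h2, h3⟩ ⟨g1, g2⟩ hL e1 hl
    have hXX := hL n le_rfl
    have hP : 0 < ∏ k ∈ Finset.range n, (iterLog k l)⁻¹ := by
      apply Finset.prod_pos
      intro k hk
      have := hL k (by rw [Finset.mem_range] at hk; omega)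
      positivity
    rw [Finset.prod_range_succ]
    set P := ∏ k ∈ Finset.range n, (iterLog k l)⁻¹
    set X := iterLog n l
    show _ ≤ Real.log (1 + phiIter β n (2*l) ^ (β/2)) - Real.log (1 + phiIter β n l ^ (β/2)) ∧
      Real.log (1 + phiIter β n (2*l) ^ (β/2)) - Real.log (1 + phiIter β n l ^ (β/2)) ≤ _ ∧
      Real.log (1 + phiIter β n (2*l) ^ (β/2)) ≤ 2 * Real.log (1 + phiIter β n l ^ (β/2))
    set x := phiIter β n l
    set y := phiIter β n (2*l)
    have hx1 : 1 ≤ x := by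
      rw [div_le_iff₀ hb] at e1
      linarith
    have hxy : x ≤ y := by
      have : 0 < c * (l * P) := by positivity
      linarith
    have hx0 : 0 < x := by linarith
    have hy0 : 0 < y := by linarith
    set a := β/2 with ha
    have ha0 : 0 < a := by positivity
    have ha1 : a ≤ 1 := by linarith
    have hxa : 0 < x^a := by positivity
    have hya : 0 < y^a := by positivity
    have hxya : x^a ≤ y^a := Real.rpow_le_rpow hx0.le hxy ha0.le
    have hya1 : 1 ≤ y^a := Real.one_le_rpow (by linarith) ha0.le
    rw [← Real.log_div (by positivity) (by positivity)]
    refine ⟨?_, ?_, ?_⟩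
    · have hw : 0 < (1 + y^a)/(1+x^a) := by positivity
      have k1 := Real.one_sub_inv_le_log_of_pos hw
      have k2 : (x/y)^a ≤ 1 + a * (x/y - 1) := by
        have := rpow_one_add_le_one_add_mul_self (s := x/y - 1) (p := a)
          (by have : 0 < x/y := by positivity
              linarith) ha0.le ha1
        simpa using this
      have k3 : (x/y)^a = x^a / y^a := Real.div_rpow hx0.le hy0.le a
      have k4 : 1/2 * (1 - x^a/y^a) ≤ 1 - ((1 + y^a)/(1+x^a))⁻¹ := by
        have : 1 - ((1 + y^a)/(1+x^a))⁻¹ = (y^a - x^a)/(1+y^a) := by field_simp; ring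
        rw [this]
        have : 1/2 * (1 - x^a/y^a) = (y^a - x^a)/(2 * y^a) := by field_simp
        rw [this]
        apply div_le_div_of_nonneg_left (by linarith) (by positivity) (by linarith)
      have k5 : (y-x)/(2*x) ≤ 1 - x/y := by
        have : 1 - x/y = (y-x)/y := by field_simp
        rw [this]
        apply div_le_div_of_nonneg_left (by linarith) (by positivity) (by linarith)
      have k6 : β/8 * c / B * (l * (P * X⁻¹)) ≤ a / 2 * ((y-x)/(2*x)) := by
        have : c * (l*P) / (B * X) ≤ (y-x)/x := by
          apply div_le_div₀ (by linarith) h1 hx0 g2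
        calc _ = β/8 * (c * (l*P) / (B * X)) := by field_simp
          _ ≤ β/8 * ((y-x)/x) := by gcongr
          _ = _ := by rw [ha]; field_simp; ring
      have k7 : a/2 * ((y-x)/(2*x)) ≤ a/2 * (1 - x/y) := by gcongr
      rw [k3] at k2
      nlinarith
    · have q1 : (1 + y^a)/(1+x^a) ≤ y/x := by
        have r1 : (y/x)^a ≤ y/x := by
          calc (y/x)^a ≤ (y/x)^(1:ℝ) :=
                Real.rpow_le_rpow_of_exponent_le (by rw [le_div_iff₀ hx0]; linarith) ha1
            _ = _ := Real.rpow_one _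
        rw [Real.div_rpow hy0.le hx0.le] at r1
        refine le_trans ?_ r1
        rw [div_le_div_iff₀ (by positivity) hxa]
        nlinarith
      have q2 := Real.log_le_log (by positivity) q1
      have q3 := Real.log_le_sub_one_of_pos (show 0 < y/x by positivity)
      have q4 : (y-x)/x ≤ C * (l*P) / (b * X) :=
        div_le_div₀ (by positivity) h2 (by positivity) g1
      calc _ ≤ (y-x)/x := by
            have : (y-x)/x = y/x - 1 := by field_simp
            linarith
        _ ≤ _ := q4
        _ = _ := by field_simp
    · have : 2 * Real.log (1 + x^a) = Real.log ((1+x^a)^2) := by rw [Real.log_pow]; norm_num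
      rw [this]
      apply Real.log_le_log (by positivity)
      have : y^a ≤ 2 * x^a := by
        calc y^a ≤ (2*x)^a := Real.rpow_le_rpow hy0.le h3 ha0.le
          _ = 2^a * x^a := Real.mul_rpow (by norm_num) hx0.le
          _ ≤ 2 * x^a := by
            gcongr
            calc (2:ℝ)^a ≤ 2^(1:ℝ) := Real.rpow_le_rpow_of_exponent_le (by norm_num) ha1
              _ = 2 := Real.rpow_one _
      nlinarith

lemma prod_eq (n : ℕ) (hn : 1 ≤ n) (x : ℝ) (hx : 0 < x) :
    x * ∏ k ∈ Finset.range n, (iterLog k x)⁻¹ = ∏ k ∈ Finset.Icc 1 (n - 1), (iterLog k x)⁻¹ := by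
  obtain ⟨m, rfl⟩ : ∃ m, n = m + 1 := ⟨n-1, by omega⟩
  rw [Finset.prod_range_succ']
  have : ∏ k ∈ Finset.Icc 1 (m+1-1), (iterLog k x)⁻¹ = ∏ k ∈ Finset.range m, (iterLog (k+1) x)⁻¹ := by
    rw [Finset.range_eq_Ico, Finset.prod_Ico_add' (fun k => (iterLog k x)⁻¹) 0 m 1]
    rfl
  rw [this]
  simp only [iterLog]
  field_simp

/-- Asymptotics of the second difference of `ψ`. -/
lemma diff_asymp (β : ℝ) (hβ0 : 0 < β) (hβ2 : β ≤ 2) (n : ℕ) (hn : 1 ≤ n) (ψ0 : ℝ) :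
    ∃ c C : ℝ, 0 < c ∧ 0 < C ∧ ∀ᶠ l in atTop,
      c * (l * GG n l) ≤ 2 * (l / phiIter β n l - ψ0) - ((2*l) / phiIter β n (2*l) - ψ0) ∧
      2 * (l / phiIter β n l - ψ0) - ((2*l) / phiIter β n (2*l) - ψ0) ≤ C * (l * GG n l) ∧
      ψ0 < l / phiIter β n l := by
  obtain ⟨b, B, hb, hB, hcomp⟩ := phi_comp β hβ0 hβ2 n
  obtain ⟨c, C, hc, hC, hd⟩ := phi_diff β hβ0 hβ2 n
  refine ⟨c/(2*B^2), 2*C/b^2 + 1, by positivity, by positivity, ?_⟩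
  have t1 := (GG_tendsto n hn).eventually_ge_atTop (|ψ0| / (c/(2*B^2)))
  have t2 := (GG_tendsto n hn).eventually_ge_atTop |ψ0|
  have t3 := (GG_tendsto n hn).eventually_gt_atTop (B * |ψ0|)
  filter_upwards [hcomp, hd, iterLog_large n 2, t1, t2, t3, eventually_gt_atTop 0] with
    l ⟨g1, g2⟩ ⟨h1, h2, h3⟩ hL t1 t2 t3 hl
  have hXX := hL n le_rfl
  have hG := GG_le n l hL
  rw [prod_eq n hn l hl] at h1 h2
  have hP : 0 < ∏ k ∈ Finset.Icc 1 (n - 1), (iterLog k l)⁻¹ := by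
    apply Finset.prod_pos
    intro k hk
    have := hL k (by rw [Finset.mem_Icc] at hk; omega)
    positivity
  have hGe : GG n l = (iterLog n l ^ 2)⁻¹ * ∏ k ∈ Finset.Icc 1 (n - 1), (iterLog k l)⁻¹ := rfl
  set P := ∏ k ∈ Finset.Icc 1 (n - 1), (iterLog k l)⁻¹
  set X := iterLog n l
  set x := phiIter β n l
  set y := phiIter β n (2*l)
  have hX0 : 0 < X := by linarith
  have hx0 : 0 < x := by
    have : 0 < b * X := by positivity
    linarith
  have hxy : x ≤ y := by
    have : 0 < c * P := by positivity
    linarith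
  have hy0 : 0 < y := by linarith
  have e : 2 * (l / x - ψ0) - ((2*l) / y - ψ0) = 2 * l * ((y - x)/(x*y)) - ψ0 := by
    field_simp; ring
  rw [e]
  have hab := abs_le.1 (le_refl |ψ0|)
  rw [div_le_iff₀ (by positivity)] at t1
  have u1 : c * P / (2 * (B*X)^2) ≤ (y-x)/(x*y) := by
    apply div_le_div₀ (by linarith) h1 (by positivity)
    have : x * y ≤ x * (2 * x) := by gcongr
    have : x^2 ≤ (B*X)^2 := by gcongr
    nlinarith
  have u2 : (y-x)/(x*y) ≤ C * P / ((b*X)^2) := by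
    apply div_le_div₀ (by positivity) h2 (by positivity)
    have : x * x ≤ x * y := by gcongr
    have : (b*X)^2 ≤ x^2 := by gcongr
    nlinarith
  refine ⟨?_, ?_, ?_⟩
  · have : 2 * l * (c * P / (2 * (B*X)^2)) ≤ 2 * l * ((y-x)/(x*y)) := by gcongr
    have e2 : 2 * l * (c * P / (2 * (B*X)^2)) = 2 * ((c/(2*B^2)) * (l * GG n l)) := by
      rw [hGe]; field_simp
    linarith
  · have : 2 * l * ((y-x)/(x*y)) ≤ 2 * l * (C * P / ((b*X)^2)) := by gcongr
    have e2 : 2 * l * (C * P / ((b*X)^2)) = 2*C/b^2 * (l * GG n l) := by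
      rw [hGe]; field_simp
    linarith
  · rw [lt_div_iff₀ hx0]
    have v1 : l * GG n l ≤ l * X⁻¹ := by gcongr
    have v2 : B * |ψ0| * X < l := by
      have := lt_of_lt_of_le t3 v1
      rwa [← div_eq_mul_inv, lt_div_iff₀ hX0] at this
    have v3 : ψ0 * x ≤ |ψ0| * x := by gcongr; exact hab.2
    have v4 : |ψ0| * x ≤ |ψ0| * (B*X) := by gcongr
    nlinarith

lemma one_sub_exp_ge (l t : ℝ) (h : 1/2 ≤ l * t) :
    (1 - Real.exp (-(1/2)))^2 ≤ (1 - Real.exp (-(l*t)))^2 := by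
  have h1 : Real.exp (-(1/2)) ≤ 1 := Real.exp_le_one_iff.2 (by norm_num)
  have h2 : Real.exp (-(l*t)) ≤ Real.exp (-(1/2)) := Real.exp_le_exp.2 (by linarith)
  apply pow_le_pow_left₀ <;> linarith

lemma one_sub_exp_le_one (l t : ℝ) (h : 0 ≤ l * t) :
    (1 - Real.exp (-(l*t)))^2 ≤ 1 := by
  have h1 : Real.exp (-(l*t)) ≤ 1 := Real.exp_le_one_iff.2 (by linarith)
  have h2 := Real.exp_pos (-(l*t))
  apply pow_le_one₀ <;> linarith

lemma one_sub_exp_le_sq (l t : ℝ) (h : 0 ≤ l * t) :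
    (1 - Real.exp (-(l*t)))^2 ≤ (l*t)^2 := by
  have h1 : Real.exp (-(l*t)) ≤ 1 := Real.exp_le_one_iff.2 (by linarith)
  have h2 := Real.add_one_le_exp (-(l*t))
  apply pow_le_pow_left₀ <;> linarith

lemma tauber (ν G : ℝ → ℝ) (Λ c1 C1 K : ℝ) (hΛ : 1 ≤ Λ) (hc1 : 0 < c1) (hC1 : 0 < C1) (hK : 0 < K)
    (hpos : ∀ t, 0 < t → 0 < ν t)
    (hdec : ∀ s t, 0 < s → s ≤ t → ν t ≤ ν s)
    (hGpos : ∀ x, Λ ≤ x → 0 < G x)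
    (hGanti : ∀ x y, Λ ≤ x → x ≤ y → G y ≤ G x)
    (hGsq : ∀ x, Λ ≤ x → G x ≤ K * G (x^2))
    (hint : ∀ l, Λ ≤ l → IntegrableOn (fun t => (1 - Real.exp (-(l*t)))^2 * ν t) (Ioi 0))
    (hlow : ∀ l, Λ ≤ l → c1 * (l * G l) ≤ ∫ t in Ioi (0:ℝ), (1 - Real.exp (-(l*t)))^2 * ν t)
    (hupp : ∀ l, Λ ≤ l → ∫ t in Ioi (0:ℝ), (1 - Real.exp (-(l*t)))^2 * ν t ≤ C1 * (l * G l)) :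
    ∃ c2 C2 t0 : ℝ, 0 < c2 ∧ 0 < C2 ∧ 0 < t0 ∧ ∀ t, 0 < t → t ≤ t0 →
      Λ ≤ 1/t ∧ c2 * (G (1/t) / t^2) ≤ ν t ∧ ν t ≤ C2 * (G (1/t) / t^2) := by
  set κ : ℝ := (1 - Real.exp (-(1/2)))^2 with hκdef
  have hκ : 0 < κ := by
    have : Real.exp (-(1/2)) < 1 := by rw [Real.exp_lt_one_iff]; norm_num
    have : 0 < 1 - Real.exp (-(1/2)) := by linarith
    positivity
  have hnn : ∀ l, ∀ t ∈ Ioi (0:ℝ), 0 ≤ (1 - Real.exp (-(l*t)))^2 * ν t := fun l t ht =>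
    mul_nonneg (sq_nonneg _) (hpos t ht).le
  have hsub : ∀ l, Λ ≤ l → ∀ S : Set ℝ, MeasurableSet S → S ⊆ Ioi (0:ℝ) →
      ∫ t in S, (1 - Real.exp (-(l*t)))^2 * ν t
        ≤ ∫ t in Ioi (0:ℝ), (1 - Real.exp (-(l*t)))^2 * ν t := by
    intro l hl S hS hS0
    apply setIntegral_mono_set (hint l hl)
    · exact (ae_restrict_iff' measurableSet_Ioi).2 (Eventually.of_forall (hnn l))
    · exact hS0.eventuallyLE
  -- upper bound
  set C2 : ℝ := 2 * C1 / κ with hC2def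
  have hC2 : 0 < C2 := by positivity
  have hup : ∀ t, 0 < t → Λ ≤ 1/t → ν t ≤ C2 * (G (1/t) / t^2) := by
    intro t ht hl
    have a0 : Ioc (t/2) t ⊆ Ioi (0:ℝ) := fun s hs => lt_trans (by positivity) hs.1
    have a1 := hsub (1/t) hl (Ioc (t/2) t) measurableSet_Ioc a0
    have a2 : ∫ s in Ioc (t/2) t, κ * ν t ≤ ∫ s in Ioc (t/2) t, (1 - Real.exp (-(1/t*s)))^2 * ν s := by
      apply setIntegral_mono_on
      · exact integrableOn_const (by simp) enorm_ne_top
      · exact (hint _ hl).mono_set a0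
      · exact measurableSet_Ioc
      · intro s hs
        apply mul_le_mul _ (hdec s t (a0 hs) hs.2) (hpos t ht).le (sq_nonneg _)
        apply one_sub_exp_ge
        rw [one_div_mul_eq_div, le_div_iff₀ ht]
        linarith [hs.1]
    have a3 : ∫ s in Ioc (t/2) t, κ * ν t = t/2 * (κ * ν t) := by
      rw [setIntegral_const, smul_eq_mul]
      congr 1
      rw [Real.volume_real_Ioc_of_le (by linarith)]; ring
    have a4 := hupp (1/t) hl
    have a5 : t/2 * (κ * ν t) ≤ C1 * (1/t * G (1/t)) := by linarith
    have : C2 * (G (1/t) / t^2) = (C1 * (1/t * G (1/t))) / (t/2 * κ) := by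
      rw [hC2def]; field_simp
    rw [this, le_div_iff₀ (by positivity)]
    linarith
  -- lower bound
  obtain ⟨ε, hε0, hε1, hε2, hε3⟩ : ∃ ε : ℝ, 0 < ε ∧ ε ≤ 1 ∧ C2 * ε ≤ c1/4 ∧ κ⁻¹ * C1 * K * ε ≤ c1/4 := by
    refine ⟨min 1 (min (c1/4/C2) (c1/4/(κ⁻¹ * C1 * K))), by positivity, min_le_left _ _, ?_, ?_⟩
    · rw [← le_div_iff₀' hC2]; exact (min_le_right _ _).trans (min_le_left _ _)
    · rw [← le_div_iff₀' (by positivity)]; exact (min_le_right _ _).trans (min_le_right _ _)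
  have hlo : ∀ l, Λ/ε ≤ l → 1/ε^2 ≤ l → c1/2 * (l * G l) ≤ ν (ε/l) / (ε * l) := by
    intro l hl1 hl2
    have hlε : Λ ≤ l * ε := by rwa [div_le_iff₀ hε0] at hl1
    have hl0 : 0 < l := lt_of_lt_of_le (by positivity) hl2
    have hlΛ : Λ ≤ l := by nlinarith
    have hGl := hGpos l hlΛ
    set a := ε/l with ha
    set b := 1/(ε*l) with hb
    have ha0 : 0 < a := by positivity
    have hb0 : 0 < b := by positivity
    have hab : a ≤ b := by
      rw [ha, hb, div_le_div_iff₀ hl0 (by positivity)]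
      nlinarith [mul_le_one₀ hε1 hε0.le hε1]
    have hI := hint l hlΛ
    have s1 : Ioc 0 a ⊆ Ioi (0:ℝ) := fun s hs => hs.1
    have s2 : Ioc a b ⊆ Ioi (0:ℝ) := fun s hs => ha0.trans hs.1
    have s3 : Ioi b ⊆ Ioi (0:ℝ) := fun s hs => hb0.trans hs
    have s4 : Ioi a ⊆ Ioi (0:ℝ) := fun s hs => ha0.trans hs
    have split : ∫ t in Ioi (0:ℝ), (1 - Real.exp (-(l*t)))^2 * ν t
        = (∫ t in Ioc 0 a, (1 - Real.exp (-(l*t)))^2 * ν t)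
          + ((∫ t in Ioc a b, (1 - Real.exp (-(l*t)))^2 * ν t)
          + ∫ t in Ioi b, (1 - Real.exp (-(l*t)))^2 * ν t) := by
      rw [← Ioc_union_Ioi_eq_Ioi ha0.le, setIntegral_union (Ioc_disjoint_Ioi le_rfl) measurableSet_Ioi
        (hI.mono_set s1) (hI.mono_set s4)]
      congr 1
      rw [← Ioc_union_Ioi_eq_Ioi hab, setIntegral_union (Ioc_disjoint_Ioi le_rfl) measurableSet_Ioi
        (hI.mono_set s2) (hI.mono_set s3)]
    have p1 : ∫ t in Ioc 0 a, (1 - Real.exp (-(l*t)))^2 * ν t ≤ c1/4 * (l * G l) := by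
      have q : ∫ t in Ioc 0 a, (1 - Real.exp (-(l*t)))^2 * ν t ≤ ∫ t in Ioc 0 a, l^2 * (C2 * G l) := by
        apply setIntegral_mono_on (hI.mono_set s1)
        · exact integrableOn_const (by simp) enorm_ne_top
        · exact measurableSet_Ioc
        · intro t ht
          have ht0 : 0 < t := ht.1
          have hlt : l ≤ 1/t := by
            rw [le_div_iff₀ ht0]
            have : l * t ≤ l * a := by gcongr; exact ht.2
            have : l * a = ε := by rw [ha]; field_simp
            linarith
          have h1 := hup t ht0 (hlΛ.trans hlt)
          have h2 : G (1/t) ≤ G l := hGanti _ _ hlΛ hlt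
          calc (1 - Real.exp (-(l*t)))^2 * ν t ≤ (l*t)^2 * (C2 * (G l / t^2)) := by
                apply mul_le_mul (one_sub_exp_le_sq _ _ (by positivity)) _ (hpos t ht0).le (sq_nonneg _)
                refine h1.trans ?_
                gcongr
            _ = _ := by field_simp
      rw [setIntegral_const, smul_eq_mul, Real.volume_real_Ioc_of_le ha0.le] at q
      refine q.trans ?_
      calc (a - 0) * (l^2 * (C2 * G l)) = (C2 * ε) * (l * G l) := by rw [ha]; field_simp; ring
        _ ≤ _ := by gcongr
    have p2 : ∫ t in Ioc a b, (1 - Real.exp (-(l*t)))^2 * ν t ≤ ν a / (ε * l) := by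
      have q : ∫ t in Ioc a b, (1 - Real.exp (-(l*t)))^2 * ν t ≤ ∫ t in Ioc a b, ν a := by
        apply setIntegral_mono_on (hI.mono_set s2)
        · exact integrableOn_const (by simp) enorm_ne_top
        · exact measurableSet_Ioc
        · intro t ht
          have ht0 : 0 < t := s2 ht
          have h1 := hdec a t ha0 ht.1.le
          have h2 := one_sub_exp_le_one l t (by positivity)
          have h3 := hpos t ht0
          nlinarith
      rw [setIntegral_const, smul_eq_mul, Real.volume_real_Ioc_of_le hab] at q
      refine q.trans ?_
      have := hpos a ha0
      calc (b - a) * ν a ≤ b * ν a := by gcongr; linarith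
        _ = _ := by rw [hb]; field_simp
    have p3 : ∫ t in Ioi b, (1 - Real.exp (-(l*t)))^2 * ν t ≤ c1/4 * (l * G l) := by
      have q : ∫ t in Ioi b, (1 - Real.exp (-(l*t)))^2 * ν t
          ≤ ∫ t in Ioi b, κ⁻¹ * ((1 - Real.exp (-((l*ε)*t)))^2 * ν t) := by
        apply setIntegral_mono_on (hI.mono_set s3)
        · exact ((hint _ hlε).mono_set s3).const_mul _
        · exact measurableSet_Ioi
        · intro t ht
          have ht0 : 0 < t := s3 ht
          have h3 := hpos t ht0
          have h2 := one_sub_exp_le_one l t (by positivity)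
          have h4 := one_sub_exp_ge (l*ε) t (by
            have : (1:ℝ) = l*ε*b := by rw [hb]; field_simp
            have : l*ε*b ≤ l*ε*t := by gcongr; exact le_of_lt ht
            linarith)
          rw [← mul_assoc]
          have : 1 ≤ κ⁻¹ * (1 - Real.exp (-((l*ε)*t)))^2 := by
            rw [← div_eq_inv_mul, le_div_iff₀ hκ]; linarith
          have := h2.trans this
          gcongr
      rw [integral_const_mul] at q
      have h1 := hsub _ hlε (Ioi b) measurableSet_Ioi s3
      have h2 := hupp _ hlε
      have h3 := hGsq _ hlε
      have h4 : G ((l*ε)^2) ≤ G l := by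
        apply hGanti _ _ hlΛ
        rw [div_le_iff₀ (by positivity)] at hl2
        nlinarith
      calc _ ≤ κ⁻¹ * (C1 * (l*ε * G (l*ε))) := by
            refine q.trans ?_
            gcongr
            exact h1.trans h2
        _ ≤ κ⁻¹ * (C1 * (l*ε * (K * G l))) := by
            gcongr
            exact h3.trans (by gcongr)
        _ = (κ⁻¹ * C1 * K * ε) * (l * G l) := by ring
        _ ≤ _ := by gcongr
    have p4 := hlow l hlΛ
    rw [split] at p4
    linarith
  refine ⟨c1/2 * ε^3, C2, min (ε^2/Λ) (ε^3), by positivity, hC2, by positivity, ?_⟩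
  intro t ht htt
  have ht1 : t ≤ ε^2/Λ := htt.trans (min_le_left _ _)
  have ht2 : t ≤ ε^3 := htt.trans (min_le_right _ _)
  rw [le_div_iff₀ (by positivity)] at ht1
  have hεε : ε^2 ≤ ε := by nlinarith
  have b1 : Λ/ε ≤ ε/t := by
    rw [div_le_div_iff₀ hε0 ht]; nlinarith
  have b2 : 1/ε^2 ≤ ε/t := by
    rw [div_le_div_iff₀ (by positivity) ht]; nlinarith
  have b3 : Λ ≤ ε/t := by
    rw [le_div_iff₀ ht]; nlinarith
  have b4 : ε/t ≤ 1/t := by gcongr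
  refine ⟨b3.trans b4, ?_, hup t ht (b3.trans b4)⟩
  have h := hlo _ b1 b2
  have e1 : ε / (ε/t) = t := by field_simp
  rw [e1, le_div_iff₀ (by positivity)] at h
  have h2 := hGanti _ _ b3 b4
  calc c1/2 * ε^3 * (G (1/t)/t^2) ≤ c1/2 * ε^3 * (G (ε/t)/t^2) := by gcongr
    _ = c1 / 2 * (ε / t * G (ε / t)) * (ε * (ε / t)) := by field_simp
    _ ≤ _ := h

lemma jump_bounds (ν : ℝ → ℝ) (q R g c2 C2 : ℝ) (N : ℕ) (hq : 1 < q) (hN : q + 2 ≤ N) (hR : 0 < R)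
    (hg : 0 < g) (hc2 : 0 < c2) (hC2 : 0 < C2)
    (hpos : ∀ t, 0 < t → 0 < ν t)
    (hdec : ∀ s t, 0 < s → s ≤ t → ν t ≤ ν s)
    (hlow : c2 * (g / R^2) ≤ ν R)
    (hupp : ∀ t, 0 < t → t ≤ R → ν t ≤ C2 * (g / t^2)) :
    (c2 * (4 * Real.pi) ^ (-q) * Real.exp (-(1/2)) / 2) * (R ^ (-q-1) * g) ≤
      ∫ t in Ioi (0:ℝ), (4 * Real.pi * t) ^ (-q) * Real.exp (-(R / (4 * t))) * ν t ∧
    ∫ t in Ioi (0:ℝ), (4 * Real.pi * t) ^ (-q) * Real.exp (-(R / (4 * t))) * ν t ≤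
      ((4 * Real.pi) ^ (-q) * C2 * (N.factorial * 4^N + 1/(q-1))) * (R ^ (-q-1) * g) := by
  set A : ℝ := (4 * Real.pi) ^ (-q) with hA
  have hπ := Real.pi_pos
  have hA0 : 0 < A := by positivity
  have hmul : ∀ t, 0 < t → (4 * Real.pi * t) ^ (-q) = A * t ^ (-q) := fun t ht =>
    Real.mul_rpow (by positivity) ht.le
  set F : ℝ → ℝ := fun t => (4 * Real.pi * t) ^ (-q) * Real.exp (-(R / (4 * t))) * ν t with hF
  have hFnn : ∀ t ∈ Ioi (0:ℝ), 0 ≤ F t := by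
    intro t ht
    have ht0 : 0 < t := ht
    have := hpos t ht
    simp only [hF]
    positivity
  have hRq2 : R ^ (-q-2) = R ^ (-q) / R^2 := by
    rw [Real.rpow_sub hR]; norm_num
  have hRq1 : R ^ (-q-1) = R ^ (-q) / R := by
    rw [Real.rpow_sub hR, Real.rpow_one]
  have hνm : AEMeasurable ν (volume.restrict (Ioi 0)) := by
    apply aemeasurable_restrict_of_antitoneOn measurableSet_Ioi
    intro s hs t _ hst
    exact hdec s t hs hst
  have hFm : AEStronglyMeasurable F (volume.restrict (Ioi 0)) := by
    apply AEMeasurable.aestronglyMeasurable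
    apply AEMeasurable.mul _ hνm
    apply Measurable.aemeasurable
    fun_prop
  set B1 : ℝ := A * (N.factorial * 4^N) * C2 * (R ^ (-q-2) * g) with hB1
  have hB1 : ∀ t ∈ Ioc 0 R, F t ≤ B1 := by
    intro t ht
    have ht0 : 0 < t := ht.1
    have h1 := hupp t ht.1 ht.2
    have hx : 0 < R / (4*t) := by positivity
    have h2 : Real.exp (-(R/(4*t))) ≤ N.factorial * 4^N * (t/R)^N := by
      have := Real.pow_div_factorial_le_exp _ hx.le N
      rw [Real.exp_neg]
      have h3 : (N.factorial * 4^N * (t/R)^N : ℝ) = ((R/(4*t))^N / N.factorial)⁻¹ := by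
        rw [div_pow, div_pow, mul_pow]; field_simp
      rw [h3]
      exact inv_anti₀ (by positivity) this
    have h4 : (t/R)^N ≤ (t/R)^(q+2) := by
      rw [← Real.rpow_natCast]
      apply Real.rpow_le_rpow_of_exponent_ge (by positivity) _ hN
      rw [div_le_one hR]; exact ht.2
    have h5 : (t/R)^(q+2) = t^q * t^2 * R^(-q-2) := by
      rw [Real.div_rpow ht0.le hR.le, Real.rpow_add ht0, div_eq_mul_inv, ← Real.rpow_neg hR.le]
      congr 2
      · norm_num
      · ring
    have h6 : t^(-q) * t^q = 1 := by rw [← Real.rpow_add ht0]; simp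
    have h7 := hpos t ht0
    simp only [hF]
    rw [hmul t ht0]
    calc _ ≤ A * t^(-q) * (N.factorial * 4^N * (t^q * t^2 * R^(-q-2))) * (C2 * (g/t^2)) := by
          apply mul_le_mul _ h1 h7.le (by positivity)
          gcongr
          refine h2.trans ?_
          rw [← h5]
          gcongr
      _ = A * (N.factorial * 4^N) * C2 * (R^(-q-2) * g) * (t^(-q) * t^q) := by field_simp
      _ = _ := by rw [h6, mul_one]
  have hB2 : ∀ t ∈ Ioi R, F t ≤ A * C2 * (g/R^2) * t^(-q) := by
    intro t ht
    have ht0 : 0 < t := hR.trans ht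
    have h1 := hupp R hR le_rfl
    have h2 := hdec R t hR (le_of_lt ht)
    have h3 : Real.exp (-(R/(4*t))) ≤ 1 := by
      rw [Real.exp_le_one_iff]
      have : 0 < R/(4*t) := by positivity
      linarith
    have h7 := hpos t ht0
    simp only [hF]
    rw [hmul t ht0]
    calc _ ≤ A * t^(-q) * 1 * (C2 * (g/R^2)) := by
          apply mul_le_mul _ (h2.trans h1) h7.le (by positivity)
          gcongr
      _ = _ := by ring
  have s1 : Ioc 0 R ⊆ Ioi (0:ℝ) := fun s hs => hs.1
  have s2 : Ioi R ⊆ Ioi (0:ℝ) := fun s hs => hR.trans hs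
  have hc1 : IntegrableOn (fun _ : ℝ => B1) (Ioc 0 R) := integrableOn_const (by simp) enorm_ne_top
  have hc2' : IntegrableOn (fun t : ℝ => A * C2 * (g/R^2) * t^(-q)) (Ioi R) :=
    (integrableOn_Ioi_rpow_of_lt (by linarith) hR).const_mul _
  have i1 : IntegrableOn F (Ioc 0 R) := by
    apply Integrable.mono' hc1 (hFm.mono_set s1)
    refine (ae_restrict_iff' measurableSet_Ioc).2 (Eventually.of_forall fun t ht => ?_)
    rw [Real.norm_eq_abs, abs_of_nonneg (hFnn t (s1 ht))]
    exact hB1 t ht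
  have i2 : IntegrableOn F (Ioi R) := by
    apply Integrable.mono' hc2' (hFm.mono_set s2)
    refine (ae_restrict_iff' measurableSet_Ioi).2 (Eventually.of_forall fun t ht => ?_)
    rw [Real.norm_eq_abs, abs_of_nonneg (hFnn t (s2 ht))]
    exact hB2 t ht
  have hI : IntegrableOn F (Ioi 0) := by
    rw [← Ioc_union_Ioi_eq_Ioi hR.le]
    exact i1.union i2
  constructor
  · have a0 : Ioc (R/2) R ⊆ Ioi (0:ℝ) := fun s hs => lt_trans (by positivity) hs.1
    have a1 : ∫ t in Ioc (R/2) R, F t ≤ ∫ t in Ioi 0, F t := by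
      apply setIntegral_mono_set hI
      · exact (ae_restrict_iff' measurableSet_Ioi).2 (Eventually.of_forall hFnn)
      · exact a0.eventuallyLE
    have a2 : ∫ t in Ioc (R/2) R, (A * R^(-q) * Real.exp (-(1/2)) * (c2 * (g/R^2)))
        ≤ ∫ t in Ioc (R/2) R, F t := by
      apply setIntegral_mono_on (integrableOn_const (by simp) enorm_ne_top) (hI.mono_set a0) measurableSet_Ioc
      intro t ht
      have ht0 : 0 < t := a0 ht
      have h2 := hdec t R ht0 ht.2
      simp only [hF]
      rw [hmul t ht0]
      have h3 : Real.exp (-(1/2)) ≤ Real.exp (-(R/(4*t))) := by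
        apply Real.exp_le_exp.2
        have : R/(4*t) ≤ 1/2 := by
          rw [div_le_iff₀ (by positivity)]
          linarith [ht.1]
        linarith
      have h4 : R^(-q) ≤ t^(-q) := Real.rpow_le_rpow_of_nonpos ht0 ht.2 (by linarith)
      apply mul_le_mul _ (hlow.trans h2) (by positivity) (by positivity)
      gcongr
    rw [setIntegral_const, smul_eq_mul, Real.volume_real_Ioc_of_le (by linarith)] at a2
    refine le_trans (le_of_eq ?_) (a2.trans a1)
    rw [hRq1]; field_simp; ring
  · rw [← Ioc_union_Ioi_eq_Ioi hR.le, setIntegral_union (Ioc_disjoint_Ioi le_rfl) measurableSet_Ioi i1 i2]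
    have a1 : ∫ t in Ioc 0 R, F t ≤ ∫ t in Ioc 0 R, B1 :=
      setIntegral_mono_on i1 hc1 measurableSet_Ioc hB1
    have a2 : ∫ t in Ioi R, F t ≤ ∫ t in Ioi R, A * C2 * (g/R^2) * t^(-q) :=
      setIntegral_mono_on i2 hc2' measurableSet_Ioi hB2
    rw [setIntegral_const, smul_eq_mul, Real.volume_real_Ioc_of_le hR.le] at a1
    rw [integral_const_mul, integral_Ioi_rpow_of_lt (by linarith) hR, Real.rpow_add hR, Real.rpow_one] at a2
    refine (add_le_add a1 a2).trans (le_of_eq ?_)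
    have hq1 : q - 1 ≠ 0 := by linarith
    have hq2 : -q + 1 ≠ 0 := by intro h; apply hq1; linarith
    have e : -(R ^ (-q) * R) / (-q+1) = R^(-q) * R / (q-1) := by
      rw [neg_div, ← div_neg]; congr 1; ring
    rw [e]
    show (R - 0) * (A * (N.factorial * 4^N) * C2 * (R ^ (-q-2) * g)) + _ = _
    rw [hRq1, hRq2]; field_simp; ring

/-- The Lévy density of the subordinate Brownian motion whose subordinator has Laplace
exponent `ψ_n(λ) = λ/φ_n(λ)` (the conjugate of the iterated geometric stable exponent)
satisfies `j(r) ≍ r^{-d-2} (log_n(1/r))^{-2} ∏_{k=1}^{n-1} (log_k(1/r))⁻¹` as `r → 0+`. -/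
theorem conjugate_iterated_geometric_stable_jump_asymp
    (β : ℝ) (hβ0 : 0 < β) (hβ2 : β ≤ 2)
    (n : ℕ) (hn : 1 ≤ n)
    (ψ0 : ℝ)
    (hψ0 : Tendsto (fun l => l / phiIter β n l) (𝓝[>] (0:ℝ)) (𝓝 ψ0))
    (νn : ℝ → ℝ)
    (hνpos : ∀ t, 0 < t → 0 < νn t)
    (hνdec : ∀ s t, 0 < s → s ≤ t → νn t ≤ νn s)
    (hν : ∀ l, 0 < l →
      l / phiIter β n l - ψ0 = ∫ t in Ioi (0:ℝ), (1 - Real.exp (-(l * t))) * νn t)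
    (d : ℕ) (hd : 3 ≤ d)
    (j : ℝ → ℝ)
    (hj : ∀ r, 0 < r → j r =
      ∫ t in Ioi (0:ℝ), (4 * Real.pi * t) ^ (-(d:ℝ) / 2) * Real.exp (-(r ^ 2 / (4 * t))) * νn t) :
    ∃ c C r₀ : ℝ, 0 < c ∧ c ≤ C ∧ 0 < r₀ ∧ ∀ r, 0 < r → r < r₀ →
      c * (r ^ (-(d:ℝ) - 2) / iterLog n (1 / r) ^ 2 *
          ∏ k ∈ Finset.Icc 1 (n - 1), (iterLog k (1 / r))⁻¹) ≤ j r ∧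
      j r ≤ C * (r ^ (-(d:ℝ) - 2) / iterLog n (1 / r) ^ 2 *
          ∏ k ∈ Finset.Icc 1 (n - 1), (iterLog k (1 / r))⁻¹) := by
  obtain ⟨c1, C1, hc1, hC1, hasymp⟩ := diff_asymp β hβ0 hβ2 n hn ψ0
  obtain ⟨Λ0, hΛ0⟩ := eventually_atTop.1 (hasymp.and (iterLog_large n 2))
  set Λ := max Λ0 1 with hΛ
  have hΛ1 : 1 ≤ Λ := le_max_right _ _
  have hbig : ∀ x, Λ ≤ x → ∀ k, k ≤ n → 2 ≤ iterLog k x := fun x hx =>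
    (hΛ0 x ((le_max_left _ _).trans hx)).2
  have has : ∀ x, Λ ≤ x → _ := fun x hx => (hΛ0 x ((le_max_left _ _).trans hx)).1
  have hint1 : ∀ l, Λ ≤ l → IntegrableOn (fun t => (1 - Real.exp (-(l * t))) * νn t) (Ioi 0) := by
    intro l hl
    by_contra hcon
    have h1 := hν l (by linarith)
    rw [integral_undef hcon] at h1
    have := (has l hl).2.2
    linarith
  have hfun : ∀ l : ℝ, (fun t => (1 - Real.exp (-(l*t)))^2 * νn t) =
      fun t => 2 * ((1 - Real.exp (-(l * t))) * νn t) - (1 - Real.exp (-((2*l) * t))) * νn t := by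
    intro l
    funext t
    have : Real.exp (-((2*l)*t)) = Real.exp (-(l*t)) ^ 2 := by
      rw [← Real.exp_nat_mul]; congr 1; push_cast; ring
    rw [this]; ring
  have hint2 : ∀ l, Λ ≤ l → IntegrableOn (fun t => (1 - Real.exp (-(l*t)))^2 * νn t) (Ioi 0) := by
    intro l hl
    rw [hfun]
    exact ((hint1 l hl).const_mul 2).sub (hint1 (2*l) (by linarith))
  have hD : ∀ l, Λ ≤ l → ∫ t in Ioi (0:ℝ), (1 - Real.exp (-(l*t)))^2 * νn t =
      2 * (l / phiIter β n l - ψ0) - ((2*l) / phiIter β n (2*l) - ψ0) := by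
    intro l hl
    rw [hfun, integral_sub ((hint1 l hl).const_mul 2) (hint1 (2*l) (by linarith)),
      integral_const_mul, ← hν l (by linarith), ← hν (2*l) (by linarith)]
  set K : ℝ := 4 * 2^(n-1) with hK
  have hK0 : 0 < K := by positivity
  obtain ⟨c2, C2, t0, hc2, hC2, ht0, hmain⟩ := tauber νn (GG n) Λ c1 C1 K hΛ1 hc1 hC1 hK0 hνpos hνdec
    (fun x hx => GG_pos n x (hbig x hx)) (fun x y hx hxy => GG_anti n x y hxy (hbig x hx))
    (fun x hx => GG_sq n hn x (hbig x hx)) hint2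
    (fun l hl => by rw [hD l hl]; exact (has l hl).1)
    (fun l hl => by rw [hD l hl]; exact (has l hl).2.1)
  set q : ℝ := (d:ℝ)/2 with hq
  have hd' : (3:ℝ) ≤ d := by exact_mod_cast hd
  have hq1 : 1 < q := by rw [hq]; linarith
  set a : ℝ := c2 * (4 * Real.pi) ^ (-q) * Real.exp (-(1/2)) / 2 with ha
  set b : ℝ := (4 * Real.pi) ^ (-q) * C2 * ((d+4).factorial * 4^(d+4) + 1/(q-1)) with hb
  have hπ := Real.pi_pos
  have ha0 : 0 < a := by positivity
  have hb0 : 0 < b := by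
    have : 0 < q - 1 := by linarith
    positivity
  refine ⟨a / K, max (a/K) b, min t0 1, by positivity, le_max_left _ _, by positivity, ?_⟩
  intro r hr hrr
  have hr1 : r < t0 := hrr.trans_le (min_le_left _ _)
  have hr2 : r < 1 := hrr.trans_le (min_le_right _ _)
  have hRr : r^2 ≤ r := by nlinarith
  have hR : 0 < r^2 := by positivity
  have hΛr : Λ ≤ 1/r := (hmain r hr hr1.le).1
  obtain ⟨hΛR, hlow, -⟩ := hmain (r^2) hR (by linarith)
  have hgR := GG_pos n _ (hbig _ hΛR)
  have hgr := GG_pos n _ (hbig _ hΛr)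
  have hle : GG n (1/r^2) ≤ GG n (1/r) := by
    apply GG_anti n _ _ _ (hbig _ hΛr)
    apply one_div_le_one_div_of_le hR hRr
  have hge : GG n (1/r) ≤ K * GG n (1/r^2) := by
    have := GG_sq n hn _ (hbig _ hΛr)
    rwa [div_pow, one_pow] at this
  have hJ := jump_bounds νn q (r^2) (GG n (1/r^2)) c2 C2 (d+4) hq1 (by push_cast; rw [hq]; linarith) hR hgR
    hc2 hC2 hνpos hνdec hlow (by
      intro t ht htR
      obtain ⟨h1, -, h3⟩ := hmain t ht (by linarith)
      refine h3.trans ?_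
      have : GG n (1/t) ≤ GG n (1/r^2) := by
        apply GG_anti n _ _ _ (hbig _ hΛR)
        apply one_div_le_one_div_of_le ht htR
      gcongr)
  have hjr : j r = ∫ t in Ioi (0:ℝ), (4 * Real.pi * t) ^ (-q) * Real.exp (-(r ^ 2 / (4 * t))) * νn t := by
    rw [hj r hr, hq, neg_div]
  rw [← hjr] at hJ
  have hpow : (r^2) ^ (-q-1) = r ^ (-(d:ℝ) - 2) := by
    rw [← Real.rpow_natCast, ← Real.rpow_mul hr.le]
    congr 1
    rw [hq]; push_cast; ring
  rw [hpow] at hJ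
  have hgoal : r ^ (-(d:ℝ) - 2) / iterLog n (1 / r) ^ 2 *
          ∏ k ∈ Finset.Icc 1 (n - 1), (iterLog k (1 / r))⁻¹ = r ^ (-(d:ℝ) - 2) * GG n (1/r) := by
    unfold GG; ring
  rw [hgoal]
  have hrp : 0 < r ^ (-(d:ℝ) - 2) := by positivity
  constructor
  · refine le_trans ?_ hJ.1
    calc a / K * (r ^ (-(d:ℝ) - 2) * GG n (1/r)) ≤ a / K * (r ^ (-(d:ℝ) - 2) * (K * GG n (1/r^2))) := by gcongr
      _ = a * (r ^ (-(d:ℝ) - 2) * GG n (1/r^2)) := by field_simp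
  · refine hJ.2.trans ?_
    have := le_max_right (a/K) b
    gcongr
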